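/- arXiv:2408.06392 — 2 statements merged into one kernel-verified Lean document; each statement's English description precedes it below -/
import Mathlib

section
/- Let f be an almost embedding of K₃,₃ − 33′ (the complete bipartite graph with parts {1,2,3} and {1′,2′,3′} with the edge {3,3′} removed) in the plane, and let C be the 4-cycle 1 1′ 2 2′. Then w_f(C, 3) − w_f(C, 3′) is an odd integer, where w_f(C, v) := w'(p_{11′}, f_v) + w'(p̄_{21′}, f_v) + w'(p_{22′}, f_v) + w'(p̄_{12′}, f_v) and p̄ denotes the reverse of p. -/
/-- Sum of the oriented angles ∠A₁OA₂ + ∠A₂OA₃ + ⋯ + ∠A_{m−1}OA_m at `O`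
along a polygonal line given as a list of points in the plane `ℂ`,
where ∠AOB := Complex.arg ((B − O)/(A − O)) ∈ (−π, π]. -/
noncomputable def angSum (O : ℂ) : List ℂ → ℝ
  | a :: b :: rest => Complex.arg ((b - O) / (a - O)) + angSum O (b :: rest)
  | _ => 0

/-- `w'(A₁…A_m, O)`: the (non-closed) winding number of a polygonal line around `O`,
i.e. `(∠A₁OA₂ + ⋯ + ∠A_{m−1}OA_m) / (2π)`. -/
noncomputable def wp (O : ℂ) (l : List ℂ) : ℝ := angSum O l / (2 * Real.pi)

/-- `w(A₁…A_m, O)`: the winding number of the closed polygonal line `A₁…A_m` around `O`,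
i.e. `(∠A₁OA₂ + ⋯ + ∠A_{m−1}OA_m + ∠A_mOA₁) / (2π)`. -/
noncomputable def wcl (O : ℂ) (l : List ℂ) : ℝ := wp O (l ++ [l.headI])

/-- The image of a polygonal line: the union of the segments between consecutive points. -/
def imagePL : List ℂ → Set ℂ
  | [] => ∅
  | [a] => {a}
  | a :: b :: rest => segment ℝ a b ∪ imagePL (b :: rest)

/-!
Move two points `p`, `q` through the plane along two disjoint polygonal lines. Whichever of them
moves first, the vector `q - p` turns by the same total amount, since disjoint segments are
separated by a line. If instead `p` and `q` exchange their positions on a tripod without meeting,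
`q - p` is replaced by its opposite, so it makes a half-integer number of turns.

The edges at each of the vertices `1` and `2` form a tripod with leaves `1′`, `2′`, `3′`. Adding up
the exchange relations of the pairs of non-adjacent edges from both tripods shows that their turn
numbers `τ₁` and `τ₂` are opposite. The same sum for the tripod at `i ∈ {1, 2}` and the two edges at
`3` expresses the turning of the path `2′ i 1′` around `3` minus that around `3′` as `-τᵢ` plus a
term not involving `i`. The cycle `C` is the difference of these two paths, so
`w_f(C, 3) - w_f(C, 3′) = τ₂ - τ₁ = 2 τ₂`, which is odd.
-/

/-- The oriented angle `∠AOB ∈ (-π, π]` whose sums along polygonal lines are `angSum`. -/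
noncomputable def orientedAngle (A O B : ℂ) : ℝ :=
  Complex.arg ((B - O) / (A - O))

theorem angSum_singleton (O a : ℂ) : angSum O [a] = 0 := rfl

theorem angSum_cons_cons (O a b : ℂ) (l : List ℂ) :
    angSum O (a :: b :: l) = orientedAngle a O b + angSum O (b :: l) := rfl

theorem angSum_append_cons (O b : ℂ) (l m : List ℂ) :
    angSum O (l ++ b :: m) = angSum O (l ++ [b]) + angSum O (b :: m) := by
  induction l with
  | nil => simp [angSum_singleton]
  | cons a l ih =>
    cases l with
    | nil => simp [angSum_cons_cons, angSum_singleton]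
    | cons c l =>
      simp only [List.cons_append, angSum_cons_cons] at ih ⊢
      rw [ih, add_assoc]

theorem exists_forall_re_mul_sub_pos {S T : Set ℂ} (hS : Convex ℝ S) (hSc : IsClosed S)
    (hT : Convex ℝ T) (hTc : IsCompact T) (hST : Disjoint S T) :
    ∃ u : ℂ, ∀ x ∈ S, ∀ y ∈ T, 0 < (u * (x - y)).re := by
  obtain ⟨F, c, d, hFT, hcd, hFS⟩ :=
    RCLike.geometric_hahn_banach_compact_closed (𝕜 := ℂ) hT hTc hS hSc hST.symm
  have hF : ∀ z, F z = F 1 * z := fun z => by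
    rw [mul_comm, ← smul_eq_mul, ← map_smul, smul_eq_mul, mul_one]
  refine ⟨F 1, fun x hx y hy => ?_⟩
  rw [← hF, map_sub, Complex.sub_re, sub_pos]
  exact (hFT y hy).trans (hcd.trans (hFS x hx))

theorem isCompact_segment (a b : ℂ) : IsCompact (segment ℝ a b) := by
  rw [← convexHull_pair]
  exact (Set.toFinite _).isCompact_convexHull ℝ

theorem arg_div_of_re_pos {z w : ℂ} (hz : 0 < z.re) (hw : 0 < w.re) :
    Complex.arg (z / w) = Complex.arg z - Complex.arg w := by
  have hz0 : z ≠ 0 := by rintro rfl; simp at hz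
  have hw0 : w ≠ 0 := by rintro rfl; simp at hw
  have hz' := abs_lt.1 (Complex.abs_arg_lt_pi_div_two_iff.2 (Or.inl hz))
  have hw' := abs_lt.1 (Complex.abs_arg_lt_pi_div_two_iff.2 (Or.inl hw))
  rw [← Complex.arg_coe_angle_toReal_eq_arg, Complex.arg_div_coe_angle hz0 hw0,
    ← Real.Angle.coe_sub, Real.Angle.toReal_coe_eq_self_iff]
  constructor <;> linarith

theorem orientedAngle_of_re_pos {u A O B : ℂ} (hA : 0 < (u * (A - O)).re)
    (hB : 0 < (u * (B - O)).re) :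
    orientedAngle A O B = Complex.arg (u * (B - O)) - Complex.arg (u * (A - O)) := by
  have hu : u ≠ 0 := by rintro rfl; simp at hA
  rw [← arg_div_of_re_pos hB hA, mul_div_mul_left _ _ hu, orientedAngle]

theorem orientedAngle_of_re_pos' {u A O B : ℂ} (hA : 0 < (u * (O - A)).re)
    (hB : 0 < (u * (O - B)).re) :
    orientedAngle A O B = Complex.arg (u * (O - B)) - Complex.arg (u * (O - A)) := by
  have hneg : ∀ z, u * (O - z) = -u * (z - O) := fun z => by ring
  simp only [hneg] at hA hB ⊢
  exact orientedAngle_of_re_pos hA hB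

theorem orientedAngle_swap {O A B : ℂ} (hO : O ∉ segment ℝ A B) :
    orientedAngle B O A = -orientedAngle A O B := by
  obtain ⟨u, hu⟩ := exists_forall_re_mul_sub_pos (convex_segment A B)
    (isCompact_segment A B).isClosed (convex_singleton O) isCompact_singleton
    (Set.disjoint_singleton_right.2 hO)
  have hA := hu A (left_mem_segment ℝ A B) O rfl
  have hB := hu B (right_mem_segment ℝ A B) O rfl
  rw [orientedAngle_of_re_pos hA hB, orientedAngle_of_re_pos hB hA, neg_sub]

/-- A line separates the two segments, so the differences involved lie in one open half-plane,
where oriented angles are differences of a single argument function. -/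
theorem orientedAngle_exchange {x y z w : ℂ}
    (h : Disjoint (segment ℝ x y) (segment ℝ z w)) :
    orientedAngle x z y + orientedAngle z y w = orientedAngle z x w + orientedAngle x w y := by
  obtain ⟨u, hu⟩ := exists_forall_re_mul_sub_pos (convex_segment x y)
    (isCompact_segment x y).isClosed (convex_segment z w) (isCompact_segment z w) h
  have hx := hu x (left_mem_segment ℝ x y)
  have hy := hu y (right_mem_segment ℝ x y)
  have hz := left_mem_segment ℝ z w
  have hw := right_mem_segment ℝ z w
  rw [orientedAngle_of_re_pos (hx z hz) (hy z hz), orientedAngle_of_re_pos' (hy z hz) (hy w hw),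
    orientedAngle_of_re_pos' (hx z hz) (hx w hw), orientedAngle_of_re_pos (hx w hw) (hy w hw)]
  ring

theorem angSum_reverse {O : ℂ} {l : List ℂ} (hO : O ∉ imagePL l) :
    angSum O l.reverse = -angSum O l := by
  induction l with
  | nil => simp [angSum]
  | cons a l ih =>
    cases l with
    | nil => simp [angSum_singleton]
    | cons b l =>
      simp only [imagePL, Set.mem_union, not_or] at hO
      have ih := ih hO.2
      simp only [List.reverse_cons, List.append_assoc, List.cons_append, List.nil_append] at ih ⊢
      rw [angSum_append_cons, ih, angSum_cons_cons, angSum_cons_cons, angSum_singleton,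
        orientedAngle_swap hO.1]
      ring

theorem wp_reverse {O : ℂ} {l : List ℂ} (hO : O ∉ imagePL l) : wp O l.reverse = -wp O l := by
  rw [wp, wp, angSum_reverse hO, neg_div]

/-- `Joins l x y`: the polygonal line `l` joins `x` to `y`. It is an inductive predicate, so that
facts about polygonal lines are proved by induction on the number of segments. -/
inductive Joins : List ℂ → ℂ → ℂ → Prop
  | point (x : ℂ) : Joins [x] x x
  | cons (x : ℂ) {y z : ℂ} {l : List ℂ} : Joins (y :: l) y z → Joins (x :: y :: l) x z

namespace Joins

variable {P Q : List ℂ} {x y z w O : ℂ}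

theorem headI_getLast : ∀ {l : List ℂ} (hl : l ≠ []), Joins l l.headI (l.getLast hl)
  | [a], _ => point a
  | a :: _ :: _, _ => cons a (headI_getLast (List.cons_ne_nil _ _))

theorem left_mem (h : Joins P x y) : x ∈ imagePL P := by
  cases h with
  | point => exact rfl
  | cons => exact Or.inl (left_mem_segment ℝ _ _)

theorem right_mem (h : Joins P x y) : y ∈ imagePL P := by
  induction h with
  | point => exact rfl
  | cons _ _ ih => exact Or.inr ih

theorem coe_angSum (h : Joins P x y) (hO : O ∉ imagePL P) :
    (angSum O P : Real.Angle) = Complex.arg (y - O) - Complex.arg (x - O) := by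
  induction h with
  | point => simp [angSum_singleton]
  | @cons x y z l h ih =>
    have hx : x ≠ O := fun e => hO (e ▸ (h.cons x).left_mem)
    simp only [imagePL, Set.mem_union, not_or] at hO
    have hy : y ≠ O := fun e => hO.2 (e ▸ h.left_mem)
    rw [angSum_cons_cons, Real.Angle.coe_add, ih hO.2, orientedAngle,
      Complex.arg_div_coe_angle (sub_ne_zero.2 hy) (sub_ne_zero.2 hx)]
    abel

theorem angSum_exchange_segment (hP : Joins P x y)
    (h : Disjoint (imagePL P) (segment ℝ z w)) :
    angSum z P + orientedAngle z y w = orientedAngle z x w + angSum w P := by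
  induction hP with
  | point => simp [angSum_singleton]
  | cons x _ ih =>
    rw [imagePL, Set.disjoint_union_left] at h
    rw [angSum_cons_cons, angSum_cons_cons]
    linarith [orientedAngle_exchange h.1, ih h.2]

theorem angSum_exchange (hP : Joins P x y) (hQ : Joins Q z w)
    (h : Disjoint (imagePL P) (imagePL Q)) :
    angSum z P + angSum y Q = angSum x Q + angSum w P := by
  induction hQ with
  | point => simp [angSum_singleton]
  | cons z _ ih =>
    rw [imagePL, Set.disjoint_union_right] at h
    rw [angSum_cons_cons, angSum_cons_cons]
    linarith [hP.angSum_exchange_segment h.1, ih h.2]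

/-- The two sides are the turnings of the vector `q - p` as `(p, q)` runs from `(x, z)` to `(y, w)`
along two adjacent sides of the square `P × Q`. -/
theorem wp_exchange (hP : Joins P x y) (hQ : Joins Q z w)
    (h : Disjoint (imagePL P) (imagePL Q)) : wp z P + wp y Q = wp x Q + wp w P := by
  simp only [wp, ← add_div, hP.angSum_exchange hQ h]

end Joins

/-- For a tripod with legs `L j` from a common centre to the leaves `a j`, the number of turns made
by the vector between two points that exchange their positions on the tripod: the one waiting at
`a j` sees the other one travel through the centre from `a (j + 2)` to `a (j + 1)`, for
`j = 0, 1, 2` (indices modulo 3). -/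
noncomputable def tripodTurn (a : Fin 3 → ℂ) (L : Fin 3 → List ℂ) : ℝ :=
  ∑ j, (wp (a j) (L (j + 1)) - wp (a j) (L (j + 2)))

section Tripod

variable {a : Fin 3 → ℂ} {L : Fin 3 → List ℂ} {c d : ℂ}

theorem coe_two_pi_mul_tripodTurn (hL : ∀ j, Joins (L j) c (a j))
    (ha : ∀ j k, j ≠ k → a j ∉ imagePL (L k)) :
    ((2 * Real.pi * tripodTurn a L : ℝ) : Real.Angle) = Real.pi := by
  have hne : ∀ j k, j ≠ k → a j - a k ≠ 0 := fun j k hjk =>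
    sub_ne_zero.2 fun e => ha j k hjk (e ▸ (hL k).right_mem)
  have hswap : ∀ j k, j ≠ k →
      (Complex.arg (a k - a j) : Real.Angle) = Complex.arg (a j - a k) + Real.pi :=
    fun j k hjk => by rw [← neg_sub, Complex.arg_neg_coe_angle (hne j k hjk)]
  have hleg : ∀ j k, j ≠ k → ((2 * Real.pi * wp (a j) (L k) : ℝ) : Real.Angle) =
      Complex.arg (a k - a j) - Complex.arg (c - a j) := fun j k hjk => by
    rw [wp, mul_div_cancel₀ _ Real.two_pi_pos.ne', (hL k).coe_angSum (ha j k hjk)]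
  have hwait : ∀ j k l, j ≠ k → j ≠ l →
      ((2 * Real.pi * (wp (a j) (L k) - wp (a j) (L l)) : ℝ) : Real.Angle) =
        Complex.arg (a k - a j) - Complex.arg (a l - a j) := fun j k l hjk hjl => by
    rw [mul_sub, Real.Angle.coe_sub, hleg j k hjk, hleg j l hjl, sub_sub_sub_cancel_right]
  simp only [tripodTurn, Fin.sum_univ_three, Fin.reduceAdd, zero_add, mul_add, Real.Angle.coe_add]
  rw [hwait 0 1 2 (by decide) (by decide), hwait 1 2 0 (by decide) (by decide),
    hwait 2 0 1 (by decide) (by decide), hswap 1 0 (by decide), hswap 2 1 (by decide),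
    hswap 0 2 (by decide)]
  calc
    _ = (Real.pi : Real.Angle) - (Real.pi + Real.pi) - (Real.pi + Real.pi) := by abel
    _ = Real.pi := by simp only [Real.Angle.coe_pi_add_coe_pi, sub_zero]

theorem exists_odd_two_mul_tripodTurn (hL : ∀ j, Joins (L j) c (a j))
    (ha : ∀ j k, j ≠ k → a j ∉ imagePL (L k)) :
    ∃ n : ℤ, Odd n ∧ 2 * tripodTurn a L = n := by
  obtain ⟨k, hk⟩ := Real.Angle.angle_eq_iff_two_pi_dvd_sub.1 (coe_two_pi_mul_tripodTurn hL ha)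
  refine ⟨2 * k + 1, odd_two_mul_add_one k, ?_⟩
  push_cast
  apply mul_left_cancel₀ Real.pi_ne_zero
  linear_combination hk

theorem tripodTurn_add_tripodTurn {M : Fin 3 → List ℂ} (hL : ∀ j, Joins (L j) c (a j))
    (hM : ∀ j, Joins (M j) d (a j))
    (h : ∀ j k, j ≠ k → Disjoint (imagePL (L j)) (imagePL (M k))) :
    tripodTurn a L + tripodTurn a M = 0 := by
  have exchange : ∀ j k, j ≠ k →
      wp d (L j) + wp (a j) (M k) = wp c (M k) + wp (a k) (L j) :=
    fun j k hjk => (hL j).wp_exchange (hM k) (h j k hjk)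
  simp only [tripodTurn, Fin.sum_univ_three, Fin.reduceAdd, zero_add]
  linear_combination exchange 0 1 (by decide) + exchange 1 2 (by decide) +
    exchange 2 0 (by decide) - exchange 1 0 (by decide) - exchange 2 1 (by decide) -
    exchange 0 2 (by decide)

theorem tripodTurn_add_wp_sub_wp {P Q : List ℂ} (hL : ∀ j, Joins (L j) c (a j))
    (hP : Joins P d (a 0)) (hQ : Joins Q d (a 1))
    (hLP : ∀ j ≠ 0, Disjoint (imagePL (L j)) (imagePL P))
    (hLQ : ∀ j ≠ 1, Disjoint (imagePL (L j)) (imagePL Q)) :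
    tripodTurn a L + (wp d (L 0) - wp d (L 1)) - (wp (a 2) (L 0) - wp (a 2) (L 1)) =
      wp (a 1) P - wp (a 2) P - (wp (a 0) Q - wp (a 2) Q) := by
  have h1P := (hL 1).wp_exchange hP (hLP 1 (by decide))
  have h2P := (hL 2).wp_exchange hP (hLP 2 (by decide))
  have h0Q := (hL 0).wp_exchange hQ (hLQ 0 (by decide))
  have h2Q := (hL 2).wp_exchange hQ (hLQ 2 (by decide))
  simp only [tripodTurn, Fin.sum_univ_three, Fin.reduceAdd, zero_add]
  linear_combination h0Q - h2Q - h1P + h2P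

end Tripod

/-- Let `f` be an almost embedding of `K₃,₃ − 33′` in the plane, and let
`C` be the 4-cycle `1 1′ 2 2′`. Then `w_f(C, 3) − w_f(C, 3′)` is an odd integer, where
`w_f(C, v) := w'(p₁₁′, f_v) + w'(p̄₂₁′, f_v) + w'(p₂₂′, f_v) + w'(p̄₁₂′, f_v)`.
Here the parts `{1,2,3}` and `{1′,2′,3′}` are encoded by `f g : Fin 3 → ℂ`, the
polygonal line `p i j` joins `f i` to `g j` for each edge `{i,j′} ≠ {3,3′}` (i.e.
`¬(i = 2 ∧ j = 2)`), the six points are pairwise distinct, images of non-adjacent edges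
(edges sharing no vertex) are disjoint, and no vertex lies on the image of an edge not
containing it. -/
theorem winding_difference_odd_K33_minus_edge (f g : Fin 3 → ℂ)
    (p : Fin 3 → Fin 3 → List ℂ)
    (hinjf : Function.Injective f) (hinjg : Function.Injective g)
    (hfg : ∀ i j, f i ≠ g j)
    (hne : ∀ i j, ¬(i = 2 ∧ j = 2) → p i j ≠ [])
    (hjoin : ∀ i j, ∀ h : ¬(i = 2 ∧ j = 2),
      (p i j).headI = f i ∧ (p i j).getLast (hne i j h) = g j)
    (hdisj : ∀ i j k l : Fin 3, ¬(i = 2 ∧ j = 2) → ¬(k = 2 ∧ l = 2) →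
      i ≠ k → j ≠ l → Disjoint (imagePL (p i j)) (imagePL (p k l)))
    (hvf : ∀ v i j : Fin 3, ¬(i = 2 ∧ j = 2) → v ≠ i → f v ∉ imagePL (p i j))
    (hvg : ∀ v i j : Fin 3, ¬(i = 2 ∧ j = 2) → v ≠ j → g v ∉ imagePL (p i j)) :
    ∃ n : ℤ, Odd n ∧
      (wp (f 2) (p 0 0) + wp (f 2) (p 1 0).reverse +
        wp (f 2) (p 1 1) + wp (f 2) (p 0 1).reverse) -
      (wp (g 2) (p 0 0) + wp (g 2) (p 1 0).reverse +
        wp (g 2) (p 1 1) + wp (g 2) (p 0 1).reverse) = n := by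
  have hp : ∀ i j, ¬(i = 2 ∧ j = 2) → Joins (p i j) (f i) (g j) := fun i j h => by
    rw [← (hjoin i j h).1, ← (hjoin i j h).2]
    exact .headI_getLast _
  have htripod : ∀ i ≠ 2, ∀ j, Joins (p i j) (f i) (g j) := fun i hi j => hp i j (by simp [hi])
  have hopposite : tripodTurn g (p 0) + tripodTurn g (p 1) = 0 :=
    tripodTurn_add_tripodTurn (htripod 0 (by decide)) (htripod 1 (by decide)) fun j k =>
      hdisj 0 j 1 k (by simp) (by simp) (by decide)
  have hlegs : ∀ i ≠ 2, tripodTurn g (p i) + (wp (f 2) (p i 0) - wp (f 2) (p i 1)) -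
      (wp (g 2) (p i 0) - wp (g 2) (p i 1)) =
      wp (g 1) (p 2 0) - wp (g 2) (p 2 0) - (wp (g 0) (p 2 1) - wp (g 2) (p 2 1)) := fun i hi =>
    tripodTurn_add_wp_sub_wp (htripod i hi) (hp 2 0 (by decide)) (hp 2 1 (by decide))
      (fun j hj => hdisj i j 2 0 (by simp [hi]) (by decide) hi hj)
      (fun j hj => hdisj i j 2 1 (by simp [hi]) (by decide) hi hj)
  obtain ⟨n, hn, hturn⟩ := exists_odd_two_mul_tripodTurn (htripod 1 (by decide)) fun j k hjk =>
    hvg j 1 k (by simp) hjk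
  refine ⟨n, hn, ?_⟩
  rw [wp_reverse (hvf 2 1 0 (by simp) (by decide)), wp_reverse (hvf 2 0 1 (by simp) (by decide)),
    wp_reverse (hvg 2 1 0 (by simp) (by decide)), wp_reverse (hvg 2 0 1 (by simp) (by decide))]
  linear_combination hturn - hopposite + hlegs 0 (by decide) - hlegs 1 (by decide)
end

section
/- Let A₁, A₂, A₃ be points in the plane and l₁, l₂, l₃ polygonal lines joining A₁ to A₂, A₂ to A₃, and A₃ to A₁ respectively, such that Aᵢ does not lie on the image of l_{i+1} for each i = 1, 2, 3 (indices modulo 3). Then the cyclic Wu number wu(l₁, l₂, l₃) := 2·(w'(l₂, A₁) + w'(l₁, A₃) + w'(l₃, A₂)) is an odd integer. -/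
/-!
Seen from `O`, a polygonal line whose vertices avoid `O` turns by the oriented angle between the
directions of its endpoints, up to a multiple of `2π`, because consecutive oriented angles add.
So the three angle sums are, modulo `2π`, the angles of the triangle `A₁A₂A₃`, whose oriented sum
is `π`; dividing by `π` gives an odd integer.
-/

open Complex (orientation)
open scoped Real ComplexConjugate

attribute [local instance] Complex.finrank_real_complex_fact

theorem angle_coe_eq_pi_iff {θ : ℝ} : (θ : Real.Angle) = π ↔ ∃ n : ℤ, Odd n ∧ θ = n * π := by
  rw [Real.Angle.angle_eq_iff_two_pi_dvd_sub]
  constructor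
  · rintro ⟨k, hk⟩
    refine ⟨2 * k + 1, ⟨k, rfl⟩, ?_⟩
    push_cast
    linarith
  · rintro ⟨_, ⟨k, rfl⟩, rfl⟩
    refine ⟨k, ?_⟩
    push_cast
    ring

theorem arg_div_eq_arg_conj_mul (z w : ℂ) : (w / z).arg = (conj z * w).arg := by
  obtain rfl | hz := eq_or_ne z 0
  · simp
  · have h_pos : 0 < (Complex.normSq z)⁻¹ := inv_pos.mpr (Complex.normSq_pos.mpr hz)
    rw [div_eq_mul_inv, Complex.inv_def, ← mul_assoc, Complex.arg_mul_real h_pos, mul_comm]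

theorem coe_arg_div_eq_oangle (z w : ℂ) : ((w / z).arg : Real.Angle) = orientation.oangle z w := by
  rw [Complex.oangle, arg_div_eq_arg_conj_mul]

theorem coe_angSum {O : ℂ} : ∀ {l : List ℂ} (hl : l ≠ []), O ∉ l →
    (angSum O l : Real.Angle) = orientation.oangle (l.headI - O) (l.getLast hl - O)
  | [a], _, _ => by simp [angSum]
  | a :: b :: l, _, hO => by
    have sub_ne_zero_of_mem {x : ℂ} (hx : x ∈ a :: b :: l) : x - O ≠ 0 :=
      sub_ne_zero.mpr (ne_of_mem_of_not_mem hx hO)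
    have hO_tail : O ∉ b :: l := mt (List.mem_cons_of_mem a) hO
    rw [angSum, Real.Angle.coe_add, coe_arg_div_eq_oangle,
      coe_angSum (List.cons_ne_nil b l) hO_tail, List.getLast_cons (List.cons_ne_nil b l)]
    exact orientation.oangle_add (sub_ne_zero_of_mem (by simp)) (sub_ne_zero_of_mem (by simp))
      (sub_ne_zero_of_mem (List.mem_cons_of_mem a (List.getLast_mem _)))

theorem oangle_sub_add_cyc3_eq_pi {V : Type*} [NormedAddCommGroup V] [InnerProductSpace ℝ V]
    [Fact (Module.finrank ℝ V = 2)] (o : Orientation ℝ V (Fin 2)) {A B C : V}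
    (hAB : A ≠ B) (hBC : B ≠ C) (hCA : C ≠ A) :
    o.oangle (B - A) (C - A) + o.oangle (A - C) (B - C) + o.oangle (C - B) (A - B) = π := by
  simpa only [neg_sub] using o.oangle_add_cyc3_neg_left
    (sub_ne_zero.mpr hAB) (sub_ne_zero.mpr hCA) (sub_ne_zero.mpr hBC)

theorem two_mul_wp (O : ℂ) (l : List ℂ) : 2 * wp O l = angSum O l / π := by
  rw [wp, ← mul_div_assoc, mul_div_mul_left _ _ two_ne_zero]

theorem headI_mem {α : Type*} [Inhabited α] {l : List α} (hl : l ≠ []) : l.headI ∈ l := by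
  obtain ⟨a, l, rfl⟩ := List.exists_cons_of_ne_nil hl
  exact List.mem_cons_self

theorem mem_imagePL_of_mem {a : ℂ} {l : List ℂ} (ha : a ∈ l) : a ∈ imagePL l := by
  induction l using imagePL.induct with
  | case1 => simp at ha
  | case2 b => simpa [imagePL] using ha
  | case3 b c l ih =>
    obtain rfl | ha_tail := List.mem_cons.mp ha
    · exact Or.inl (left_mem_segment ℝ a c)
    · exact Or.inr (ih ha_tail)

theorem cyclic_wu_number_odd_general (A₁ A₂ A₃ : ℂ) (l₁ l₂ l₃ : List ℂ)
    (hn1 : l₁ ≠ []) (hn2 : l₂ ≠ []) (hn3 : l₃ ≠ [])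
    (hh1 : l₁.headI = A₁) (he1 : l₁.getLast hn1 = A₂)
    (hh2 : l₂.headI = A₂) (he2 : l₂.getLast hn2 = A₃)
    (hh3 : l₃.headI = A₃) (he3 : l₃.getLast hn3 = A₁)
    (h1 : A₁ ∉ l₂) (h2 : A₂ ∉ l₃) (h3 : A₃ ∉ l₁) :
    ∃ n : ℤ, Odd n ∧ 2 * (wp A₁ l₂ + wp A₃ l₁ + wp A₂ l₃) = n := by
  have hA₁₂ : A₁ ≠ A₂ := (ne_of_mem_of_not_mem (hh2 ▸ headI_mem hn2) h1).symm
  have hA₂₃ : A₂ ≠ A₃ := (ne_of_mem_of_not_mem (hh3 ▸ headI_mem hn3) h2).symm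
  have hA₃₁ : A₃ ≠ A₁ := (ne_of_mem_of_not_mem (hh1 ▸ headI_mem hn1) h3).symm
  have h_sum : ((angSum A₁ l₂ + angSum A₃ l₁ + angSum A₂ l₃ : ℝ) : Real.Angle) = π := by
    rw [Real.Angle.coe_add, Real.Angle.coe_add, coe_angSum hn2 h1, coe_angSum hn1 h3,
      coe_angSum hn3 h2, hh1, he1, hh2, he2, hh3, he3]
    exact oangle_sub_add_cyc3_eq_pi orientation hA₁₂ hA₂₃ hA₃₁
  obtain ⟨n, hn_odd, hn⟩ := angle_coe_eq_pi_iff.mp h_sum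
  refine ⟨n, hn_odd, ?_⟩
  rw [mul_add, mul_add, two_mul_wp, two_mul_wp, two_mul_wp, ← add_div, ← add_div, hn,
    mul_div_cancel_right₀ _ Real.pi_ne_zero]

/-- Let `A₁, A₂, A₃` be points in the plane and `l₁, l₂, l₃` polygonal
lines joining `A₁` to `A₂`, `A₂` to `A₃`, and `A₃` to `A₁` respectively, such that `Aᵢ`
does not lie on the image of `l_{i+1}` for each `i = 1, 2, 3` (indices modulo 3). Then
the cyclic Wu number `wu(l₁, l₂, l₃) := 2·(w'(l₂, A₁) + w'(l₁, A₃) + w'(l₃, A₂))` is an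
odd integer. -/
theorem cyclic_wu_number_odd (A₁ A₂ A₃ : ℂ) (l₁ l₂ l₃ : List ℂ)
    (hn1 : l₁ ≠ []) (hn2 : l₂ ≠ []) (hn3 : l₃ ≠ [])
    (hh1 : l₁.headI = A₁) (he1 : l₁.getLast hn1 = A₂)
    (hh2 : l₂.headI = A₂) (he2 : l₂.getLast hn2 = A₃)
    (hh3 : l₃.headI = A₃) (he3 : l₃.getLast hn3 = A₁)
    (h1 : A₁ ∉ imagePL l₂) (h2 : A₂ ∉ imagePL l₃) (h3 : A₃ ∉ imagePL l₁) :
    ∃ n : ℤ, Odd n ∧ 2 * (wp A₁ l₂ + wp A₃ l₁ + wp A₂ l₃) = n := by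
  exact cyclic_wu_number_odd_general A₁ A₂ A₃ l₁ l₂ l₃ hn1 hn2 hn3 hh1 he1 hh2 he2 hh3 he3
    (mt mem_imagePL_of_mem h1) (mt mem_imagePL_of_mem h2) (mt mem_imagePL_of_mem h3)
end
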